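/- Let G be a noncyclic grid graph with parameters d ≥ 1 and lengths ℓ₁,…,ℓ_d satisfying ℓᵢ ≥ 2·(ℓ_{i+1}·…·ℓ_d) + 2 for all i ∈ {1,…,d−1} and ℓ_d ≥ 3. Let f be a candidate graphical translation of G maximizing |V₀,f| among all candidate graphical translations of G, extended by f(ω) = ω, and let v be a vertex such that fⁿ(v) ≠ ω for all n ≥ 0. Then the orbit of v is eventually periodic with period 4: there exists N ≥ 0 such that f^{n+4}(v) = fⁿ(v) for all n ≥ N. -/

import Mathlib

/-- Membership in the vertex set of the noncyclic grid graph with parameters `d` and `ℓ`: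
`V = [0, ℓ₁ - 1] × ⋯ × [0, ℓ_d - 1] ⊆ ℤ^d`. -/
def InGrid (d : ℕ) (ℓ : Fin d → ℕ) (v : Fin d → ℤ) : Prop :=
  ∀ i, 0 ≤ v i ∧ v i < ℓ i

/-- Adjacency in the noncyclic grid graph: taxicab distance equal to `1`. -/
def TaxiAdj {d : ℕ} (v w : Fin d → ℤ) : Prop :=
  (∑ i, |v i - w i|) = 1

/-- The `i`-th canonical basis vector of `ℤ^d`. -/
def gridBasis (d : ℕ) (i : Fin d) : Fin d → ℤ :=
  fun j => if j = i then 1 else 0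

/-- A candidate graphical translation of the noncyclic grid graph with parameters `d`
and `ℓ`: a map `f : V → V ∪ {ω}` (modeled with `Option`, `none` being the black hole
`ω`) that is injective on `V₀,f = f⁻¹(V)`, maps every vertex of `V₀,f` to a neighbor,
and preserves (non-)adjacency both ways on `V₀,f`. -/
structure IsCandidateGridTranslation (d : ℕ) (ℓ : Fin d → ℕ)
    (f : {v : Fin d → ℤ // InGrid d ℓ v} → Option {v : Fin d → ℤ // InGrid d ℓ v}) :
    Prop where
  inj : ∀ v w x, f v = some x → f w = some x → v = w
  adj_map : ∀ v w, f v = some w → TaxiAdj v.1 w.1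
  pres : ∀ v₁ v₂ w₁ w₂, f v₁ = some w₁ → f v₂ = some w₂ →
    (TaxiAdj v₁.1 v₂.1 ↔ TaxiAdj w₁.1 w₂.1)


open Classical in
theorem finite_grid (d : ℕ) (ℓ : Fin d → ℕ) : {v : Fin d → ℤ | InGrid d ℓ v}.Finite := by
  refine (Set.finite_Icc (fun _ => (0:ℤ)) (fun i => (ℓ i : ℤ))).subset ?_
  intro v hv
  exact ⟨fun i => (hv i).1, fun i => (hv i).2.le⟩

/-- unit vectors -/
def UnitV {d : ℕ} (u : Fin d → ℤ) : Prop :=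
  ∃ k, ∃ s : ℤ, (s = 1 ∨ s = -1) ∧ u = Pi.single k s

theorem unitV_neg {d : ℕ} {u : Fin d → ℤ} (h : UnitV u) : UnitV (-u) := by
  obtain ⟨k, s, hs, rfl⟩ := h
  refine ⟨k, -s, by omega, by rw [Pi.single_neg]⟩

theorem unitV_ne_zero {d : ℕ} {u : Fin d → ℤ} (h : UnitV u) : u ≠ 0 := by
  obtain ⟨k, s, hs, rfl⟩ := h
  intro h
  have := congrFun h k
  simp at this
  omega

theorem taxi_iff {d : ℕ} (v w : Fin d → ℤ) : TaxiAdj v w ↔ UnitV (w - v) := by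
  unfold TaxiAdj
  constructor
  · intro h
    obtain ⟨i, hi⟩ : ∃ i, v i - w i ≠ 0 := by
      by_contra hc
      push Not at hc
      simp [hc] at h
    rw [← Finset.add_sum_erase _ _ (Finset.mem_univ i)] at h
    have h0 : 0 ≤ ∑ x ∈ Finset.univ.erase i, |v x - w x| :=
      Finset.sum_nonneg (fun _ _ => abs_nonneg _)
    have h1 : 0 < |v i - w i| := abs_pos.mpr hi
    have h2 : ∑ x ∈ Finset.univ.erase i, |v x - w x| = 0 := by omega
    have h3 : |v i - w i| = 1 := by omega
    rw [Finset.sum_eq_zero_iff_of_nonneg (fun _ _ => abs_nonneg _)] at h2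
    refine ⟨i, w i - v i, ?_, ?_⟩
    · rcases abs_eq (by norm_num : (0:ℤ) ≤ 1) |>.1 h3 with h | h <;> omega
    · funext k
      by_cases hk : k = i
      · subst hk; simp
      · have := h2 k (by simp [hk])
        rw [abs_eq_zero] at this
        simp [hk]; omega
  · rintro ⟨k, s, hs, h⟩
    have : ∀ i, |v i - w i| = if i = k then 1 else 0 := by
      intro i
      have h' := congrFun h i
      rw [abs_sub_comm]
      rw [Pi.sub_apply] at h'
      rw [h', Pi.single_apply]
      split_ifs
      · rcases hs with rfl | rfl <;> simp
      · simp
    simp [this]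

theorem unitV_add {d : ℕ} {u w p q : Fin d → ℤ} (hu : UnitV u) (hw : UnitV w)
    (hp : UnitV p) (hq : UnitV q) (hpq : p + q ≠ 0) (h : u + w = p + q) : u = p ∨ u = q := by
  obtain ⟨a, s, hs, rfl⟩ := hu
  obtain ⟨b, t, ht, rfl⟩ := hw
  obtain ⟨i, x, hx, rfl⟩ := hp
  obtain ⟨j, y, hy, rfl⟩ := hq
  have key : ∀ k, (if k = a then s else 0) + (if k = b then t else 0) =
      (if k = i then x else 0) + (if k = j then y else 0) := by
    intro k
    have := congrFun h k
    simpa [Pi.single_apply] using this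
  have ha := key a
  have hb := key b
  have hi := key i
  have hj := key j
  by_cases h1 : a = i
  · subst h1
    by_cases h2 : s = x
    · left; rw [h2]
    · exfalso
      by_cases h3 : a = j
      · subst h3
        by_cases hxy : x + y = 0
        · apply hpq; rw [← Pi.single_add, hxy, Pi.single_zero]
        · simp at ha hb
          split_ifs at ha hb <;> omega
      · simp [h3, Ne.symm h3] at ha hb hi hj
        split_ifs at ha hb hi hj <;> omega
  · by_cases h3 : a = j
    · subst h3
      by_cases h2 : s = y
      · right; rw [h2]
      · exfalso
        simp [h1, Ne.symm h1] at ha hb hi hj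
        split_ifs at ha hb hi hj <;> omega
    · exfalso
      simp [h1, h3] at ha
      have : a = b := by
        by_contra hab
        simp [hab] at ha
        omega
      subst this
      simp [h1, Ne.symm h1, h3, Ne.symm h3] at hi hj ha
      apply hpq
      rw [← h, ← Pi.single_add, ha, Pi.single_zero]

/-- Relational form of a candidate translation. -/
structure CRel (d : ℕ) (ℓ : Fin d → ℕ) (F : (Fin d → ℤ) → (Fin d → ℤ) → Prop) : Prop where
  dom : ∀ {a b}, F a b → InGrid d ℓ a
  cod : ∀ {a b}, F a b → InGrid d ℓ b
  func : ∀ {a b b'}, F a b → F a b' → b = b'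
  inj : ∀ {a a' b}, F a b → F a' b → a = a'
  adj : ∀ {a b}, F a b → UnitV (b - a)
  pres : ∀ {a b a' b'}, F a b → F a' b' → (UnitV (a' - a) ↔ UnitV (b' - b))

/-- Common neighbour computation. -/
theorem CRel.common {d : ℕ} {ℓ : Fin d → ℕ} {F : (Fin d → ℤ) → (Fin d → ℤ) → Prop}
    (hF : CRel d ℓ F) {a b x y p q : Fin d → ℤ} (hx : F a x) (hy : F b y)
    (hab : UnitV (b - a)) (hp : UnitV p) (hq : UnitV q) (hpq : p + q ≠ 0)
    (h : y - a = p + q) : x = a + p ∨ x = a + q := by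
  have h1 := hF.adj hx
  have h2 := (hF.pres hx hy).1 hab
  have := unitV_add h1 h2 hp hq hpq (by rw [← h]; abel)
  rcases this with h | h
  · left; rw [← h]; abel
  · right; rw [← h]; abel

theorem CRel.mid {d : ℕ} {ℓ : Fin d → ℕ} {F : (Fin d → ℤ) → (Fin d → ℤ) → Prop}
    (hF : CRel d ℓ F) {a b x y p : Fin d → ℤ} (hx : F a x) (hy : F b y)
    (hab : UnitV (b - a)) (hp : UnitV p) 
    (h : y - a = p + p) : x = a + p := by
  have hpp : p + p ≠ 0 := by
    intro h0
    apply unitV_ne_zero hp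
    funext k
    have := congrFun h0 k
    simp at this ⊢
    omega
  rcases hF.common hx hy hab hp hp hpp h with h | h <;> exact h

/-- The slab of two layers. -/
def Slab {d : ℕ} (ℓ : Fin d → ℕ) (i0 : Fin d) (c : ℤ) (v : Fin d → ℤ) : Prop :=
  InGrid d ℓ v ∧ (v i0 = c ∨ v i0 = c + 1)

theorem InGrid.add_single {d : ℕ} {ℓ : Fin d → ℕ} {v : Fin d → ℤ} (hv : InGrid d ℓ v)
    (j : Fin d) (s : ℤ) : InGrid d ℓ (v + Pi.single j s) ↔ 0 ≤ v j + s ∧ v j + s < ℓ j := by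
  constructor
  · intro h
    have := h j
    simpa using this
  · intro h k
    by_cases hk : k = j
    · subst hk; simpa using h
    · simpa [hk] using hv k

theorem slab_add {d : ℕ} {ℓ : Fin d → ℕ} {i0 j : Fin d} {c s : ℤ} {v : Fin d → ℤ}
    (hj : j ≠ i0) (hv : Slab ℓ i0 c v) (h : InGrid d ℓ (v + Pi.single j s)) :
    Slab ℓ i0 c (v + Pi.single j s) := by
  refine ⟨h, ?_⟩
  have := hv.2
  simpa [Ne.symm hj] using this

theorem slab_A {d : ℕ} {ℓ : Fin d → ℕ} {F : (Fin d → ℤ) → (Fin d → ℤ) → Prop}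
    (hF : CRel d ℓ F) (i0 : Fin d) (c : ℤ) (hfull : ∀ v, Slab ℓ i0 c v → ∃ w, F v w)
    (j : Fin d) (hj : j ≠ i0) (hlj : 3 ≤ ℓ j) (s : ℤ) (hs : s = 1 ∨ s = -1)
    (k : Fin d) (hk : k ≠ j) (t : ℤ) (ht : t = 1 ∨ t = -1)
    (v : Fin d → ℤ) (hv : Slab ℓ i0 c v) (hFv : F v (v + Pi.single j s))
    (hw : Slab ℓ i0 c (v + Pi.single k t)) :
    F (v + Pi.single k t) (v + Pi.single k t + Pi.single j s) := by
  obtain ⟨q, hq⟩ : ∃ q : Fin d → ℤ, q = Pi.single j s := ⟨_, rfl⟩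
  obtain ⟨u, hu⟩ : ∃ u : Fin d → ℤ, u = Pi.single k t := ⟨_, rfl⟩
  have Uq : UnitV q := ⟨j, s, hs, hq⟩
  have Uu : UnitV u := ⟨k, t, ht, hu⟩
  have hqu : q + u ≠ 0 := by
    intro h
    have := congrFun h j
    simp [hq, hu, Ne.symm hk] at this
    omega
  have hqu' : q + -u ≠ 0 := by
    intro h
    have := congrFun h j
    simp [hq, hu, Ne.symm hk] at this
    omega
  have hqu3 : -q + -u ≠ 0 := by
    intro h
    apply hqu
    rw [← neg_eq_zero, ← h]; abel
  have hqu4 : -q + u ≠ 0 := by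
    intro h
    apply hqu'
    rw [← neg_eq_zero, ← h]; abel
  have hvq : InGrid d ℓ (v + q) := hF.cod (hq ▸ hFv)
  have gv := hv.1
  have Sv1 : Slab ℓ i0 c (v + q) := by rw [hq]; exact slab_add hj hv (hq ▸ hvq)
  have Sback : InGrid d ℓ (v - q) → Slab ℓ i0 c (v - q) := by
    intro h
    have e : v - q = v + Pi.single j (-s) := by rw [hq, Pi.single_neg]; abel
    rw [e] at h ⊢
    exact slab_add hj hv h
  have Sfwd : ¬ InGrid d ℓ (v - q) → Slab ℓ i0 c (v + q + q) := by
    intro h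
    have e : v - q = v + Pi.single j (-s) := by rw [hq, Pi.single_neg]; abel
    rw [e, gv.add_single] at h
    have e2 : v + q + q = v + Pi.single j (s + s) := by rw [hq, Pi.single_add]; abel
    rw [e2]
    apply slab_add hj hv
    rw [gv.add_single]
    have := gv j
    omega
  have Sw (a : ℤ) (h : Slab ℓ i0 c (v + Pi.single j a)) :
      Slab ℓ i0 c (v + u + Pi.single j a) := by
    rw [hu]
    apply slab_add hj hw
    rw [hw.1.add_single]
    have := (gv.add_single j a).1 h.1
    simpa [Ne.symm hk] using this
  have Sw1 : Slab ℓ i0 c (v + u + q) := by rw [hq]; exact Sw s (hq ▸ Sv1)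
  have Sw2 : ¬ InGrid d ℓ (v - q) → Slab ℓ i0 c (v + u + q + q) := by
    intro h
    have h2 := Sfwd h
    have e2 : v + q + q = v + Pi.single j (s + s) := by rw [hq, Pi.single_add]; abel
    have e3 : v + u + q + q = v + u + Pi.single j (s + s) := by rw [hq, Pi.single_add]; abel
    rw [e2] at h2
    rw [e3]
    exact Sw _ h2
  rw [← hq] at hFv ⊢
  rw [← hu] at hw ⊢
  obtain ⟨x, hx⟩ := hfull _ hw
  have hUx : UnitV (v - (v + u)) := by
    have : v - (v + u) = -u := by abel
    rw [this]; exact unitV_neg Uu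
  rcases hF.common hx hFv hUx Uq (unitV_neg Uu) hqu' (by abel) with h | h
  · rw [← h]; exact hx
  exfalso
  have h : x = v := by rw [h]; abel
  rw [h] at hx
  by_cases hb : InGrid d ℓ (v - q)
  · obtain ⟨y, hy⟩ := hfull _ (Sback hb)
    have := hF.mid hy hFv (by have : v - (v - q) = q := by abel
                              rw [this]; exact Uq) Uq (by abel)
    rw [sub_add_cancel] at this
    rw [this] at hy
    have := hF.inj hx hy
    apply hqu
    have h2 : q + u = (v + u) - (v - q) := by abel
    rw [h2, this, sub_self]
  · obtain ⟨y, hy⟩ := hfull _ Sw1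
    have h1 : y = v + u := by
      rcases hF.common hy hx (by have : (v + u) - (v + u + q) = -q := by abel
                                 rw [this]; exact unitV_neg Uq)
        (unitV_neg Uq) (unitV_neg Uu) hqu3 (by abel) with h | h
      · rw [h]; abel
      · exfalso
        have h : y = v + q := by rw [h]; abel
        rw [h] at hy
        have := hF.inj hy hFv
        apply hqu
        have h2 : q + u = (v + u + q) - v := by abel
        rw [h2, this, sub_self]
    rw [h1] at hy
    obtain ⟨z, hz⟩ := hfull _ Sv1
    have h2 : z = v + u + q := by
      rcases hF.common hz hy (by have : (v + u + q) - (v + q) = u := by abel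
                                 rw [this]; exact Uu)
        (unitV_neg Uq) Uu hqu4 (by abel) with h | h
      · exfalso
        have h : z = v := by rw [h]; abel
        rw [h] at hz
        have := hF.inj hz hx
        apply hqu'
        have h2 : q + -u = (v + q) - (v + u) := by abel
        rw [h2, this, sub_self]
      · rw [h]; abel
    rw [h2] at hz
    obtain ⟨z', hz'⟩ := hfull _ (Sw2 hb)
    have h3 := hF.mid hz' hy (by have : (v + u + q) - (v + u + q + q) = -q := by abel
                                 rw [this]; exact unitV_neg Uq)
        (unitV_neg Uq) (by abel)
    have h3 : z' = v + u + q := by rw [h3]; abel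
    rw [h3] at hz'
    have := hF.inj hz hz'
    apply hqu
    have h2 : q + u = (v + u + q + q) - (v + q) := by abel
    rw [h2, this, sub_self]

theorem slab_B {d : ℕ} {ℓ : Fin d → ℕ} {F : (Fin d → ℤ) → (Fin d → ℤ) → Prop}
    (hF : CRel d ℓ F) (i0 : Fin d) (c : ℤ) (hfull : ∀ v, Slab ℓ i0 c v → ∃ w, F v w)
    (hc0 : 0 ≤ c) (hcL : c + 1 < ℓ i0)
    (j : Fin d) (hj : j ≠ i0) (hlj : 3 ≤ ℓ j) (s : ℤ) (hs : s = 1 ∨ s = -1)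
    (v0 : Fin d → ℤ) (hv0 : Slab ℓ i0 c v0) (hFv0 : F v0 (v0 + Pi.single j s)) : False := by
  obtain ⟨v, hv, hFv, hn⟩ : ∃ v, Slab ℓ i0 c v ∧ F v (v + Pi.single j s) ∧
      ¬ F (v + Pi.single j s) (v + Pi.single j s + Pi.single j s) := by
    by_contra hc
    push Not at hc
    have : ∀ n : ℕ, Slab ℓ i0 c (v0 + Pi.single j (n * s)) ∧
        F (v0 + Pi.single j (n * s)) (v0 + Pi.single j (n * s) + Pi.single j s) := by
      intro n
      induction n with
      | zero => simpa using ⟨hv0, hFv0⟩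
      | succ n ih =>
        have e : v0 + Pi.single j (((n + 1 : ℕ) : ℤ) * s) =
            v0 + Pi.single j (n * s) + Pi.single j s := by
          rw [add_assoc, ← Pi.single_add]
          congr 2
          push_cast; ring
        rw [e]
        exact ⟨slab_add hj ih.1 (hF.cod ih.2), hc _ ih.1 ih.2⟩
    have h1 := (this (ℓ j)).1.1 j
    have h2 := hv0.1 j
    rcases hs with rfl | rfl <;> simp at h1 <;> omega
  have gv := hv.1
  have Sv1 := slab_add hj hv (hF.cod hFv)
  obtain ⟨x, hx⟩ := hfull _ Sv1
  obtain ⟨k, t, ht, hu⟩ := hF.adj hx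
  obtain ⟨q, hq⟩ : ∃ q : Fin d → ℤ, q = Pi.single j s := ⟨_, rfl⟩
  have Uq : UnitV q := ⟨j, s, hs, hq⟩
  have hxe : x = v + q + Pi.single k t := by rw [← hu, hq]; abel
  by_cases hkj : k = j
  · subst hkj
    by_cases hts : t = s
    · subst hts
      rw [hxe, hq] at hx
      exact hn hx
    have hts : t = -s := by omega
    have hxv : x = v := by
      rw [hxe, hts, hq, add_assoc, ← Pi.single_add, add_neg_cancel, Pi.single_zero, add_zero]
    rw [hxv] at hx
    by_cases hb : InGrid d ℓ (v + Pi.single k s + Pi.single k s)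
    · obtain ⟨y, hy⟩ := hfull _ (slab_add hj Sv1 hb)
      rw [← hq] at hx hFv hy
      have := hF.mid hy hx (by have : (v + q) - (v + q + q) = -q := by abel
                               rw [this]; exact unitV_neg Uq) (unitV_neg Uq) (by abel)
      have h3 : y = v + q := by rw [this]; abel
      rw [h3] at hy
      have := hF.inj hy hFv
      have h := congrFun this k
      simp [hq] at h
      omega
    · have g2 : InGrid d ℓ (v + Pi.single k (-s)) := by
        rw [add_assoc, ← Pi.single_add, gv.add_single] at hb
        rw [gv.add_single]
        have := gv k
        omega
      obtain ⟨y, hy⟩ := hfull _ (slab_add hj hv g2)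
      have e : v + Pi.single k (-s) = v - q := by rw [hq, Pi.single_neg]; abel
      rw [← hq] at hx hFv
      rw [e] at hy
      have := hF.mid hy hFv (by have : v - (v - q) = q := by abel
                                rw [this]; exact Uq) Uq (by abel)
      have h3 : y = v := by rw [this]; abel
      rw [h3] at hy
      have := hF.inj hy hx
      have h := congrFun this k
      simp [hq] at h
      omega
  · have gx := hF.cod hx
    by_cases hS : Slab ℓ i0 c (v + Pi.single k t)
    · have := slab_A hF i0 c hfull j hj hlj s hs k hkj t ht v hv hFv hS
      have e : v + Pi.single k t + Pi.single j s = x := by rw [hxe, hq]; abel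
      rw [e] at this
      have h := congrFun (hF.inj this hx) j
      simp [Ne.symm hkj] at h
      omega
    · have g1 : InGrid d ℓ (v + Pi.single k t) := by
        rw [gv.add_single]
        have := gx k
        simpa [hxe, hq, hkj] using this
      have hk0 : k = i0 := by
        by_contra hk0
        exact hS (slab_add hk0 hv g1)
      subst hk0
      have hS2 : Slab ℓ k c (v + Pi.single k (-t)) := by
        have h1 : ¬ (v k + t = c ∨ v k + t = c + 1) := by
          intro h
          apply hS
          exact ⟨g1, by simpa using h⟩
        have h2 := hv.2
        refine ⟨?_, ?_⟩
        · rw [gv.add_single]; omega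
        · simp; omega
      have h3 := slab_A hF k c hfull j hj hlj s hs k hkj (-t) (by omega) v hv hFv hS2
      have S3 := slab_add hj hS2 (hF.cod h3)
      obtain ⟨y, hy⟩ := hfull _ S3
      have Ut : UnitV (Pi.single k t : Fin d → ℤ) := ⟨k, t, ht, rfl⟩
      have e : v + Pi.single k (-t) + Pi.single j s = v + q - Pi.single k t := by
        rw [hq, Pi.single_neg]; abel
      rw [e] at hy
      rw [← hq] at hx hFv
      have := hF.mid hy hx (by have : v + q - (v + q - Pi.single k t) = Pi.single k t := by abel
                               rw [this]; exact Ut) Ut (by rw [hxe]; abel)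
      rw [sub_add_cancel] at this
      rw [this] at hy
      have h := congrFun (hF.inj hy hFv) k
      simp [hq, hkj, Ne.symm hkj] at h
      omega

/-- Vertices sent to the black hole. -/
def LostS (d : ℕ) (ℓ : Fin d → ℕ) (F : (Fin d → ℤ) → (Fin d → ℤ) → Prop) : Set (Fin d → ℤ) :=
  {a | InGrid d ℓ a ∧ ∀ b, ¬ F a b}

theorem count_lost {d : ℕ} {ℓ : Fin d → ℕ} {F : (Fin d → ℤ) → (Fin d → ℤ) → Prop}
    (hF : CRel d ℓ F) (R Q : Set (Fin d → ℤ)) (hR : ∀ a ∈ R, InGrid d ℓ a) (hQ : Q ⊆ R)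
    (hmap : ∀ a b, a ∈ R → F a b → b ∈ R ∧ b ∉ Q) :
    Q.ncard ≤ (R ∩ LostS d ℓ F).ncard := by
  classical
  have fR : R.Finite := (finite_grid d ℓ).subset hR
  have h1 := Set.ncard_inter_add_ncard_sdiff_eq_ncard R (LostS d ℓ F) fR
  have h2 := Set.ncard_sdiff_add_ncard_of_subset hQ fR
  have hex : ∀ a ∈ R \ LostS d ℓ F, ∃ b, F a b := by
    intro a ha
    by_contra hc
    push Not at hc
    exact ha.2 ⟨hR a ha.1, hc⟩
  have h3 : (R \ LostS d ℓ F).ncard ≤ (R \ Q).ncard := by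
    refine Set.ncard_le_ncard_of_injOn (fun a => if h : ∃ b, F a b then h.choose else a) ?_ ?_
      (fR.subset Set.sdiff_subset)
    · intro a ha
      have h := hex a ha
      simp only [h, dite_true]
      exact hmap a _ ha.1 h.choose_spec
    · intro a ha a' ha' hab
      have h := hex a ha
      have h' := hex a' ha'
      simp only [h, h', dite_true] at hab
      exact hF.inj h.choose_spec (hab ▸ h'.choose_spec)
  omega

/-- Height function data. -/
structure HData (d : ℕ) (ℓ : Fin d → ℕ) (L : ℤ) (h : (Fin d → ℤ) → ℤ) (e : Fin d → ℤ) : Prop where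
  lo : ∀ {v}, InGrid d ℓ v → 0 ≤ h v
  hi : ∀ {v}, InGrid d ℓ v → h v < L
  add : ∀ v, h (v + e) = h v + 1
  sub : ∀ v, h (v - e) = h v - 1
  gadd : ∀ {v}, InGrid d ℓ v → h v + 1 < L → InGrid d ℓ (v + e)
  gsub : ∀ {v}, InGrid d ℓ v → 1 ≤ h v → InGrid d ℓ (v - e)
  ue : UnitV e
  un : ∀ {a b}, UnitV (b - a) → h b = h a ∨ (h b = h a + 1 ∧ b = a + e) ∨
    (h b = h a - 1 ∧ b = a - e)

theorem trans_main {d : ℕ} {ℓ : Fin d → ℕ} {F : (Fin d → ℤ) → (Fin d → ℤ) → Prop}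
    (hF : CRel d ℓ F) (L : ℤ) (hL : 3 ≤ L) (h : (Fin d → ℤ) → ℤ) (e : Fin d → ℤ)
    (H : HData d ℓ L h e) (P : ℕ)
    (hlay : ∀ c, 0 ≤ c → c < L → {v | InGrid d ℓ v ∧ h v = c}.ncard = P)
    (hlost : (LostS d ℓ F).ncard ≤ P) (c : ℤ) (hc0 : 0 ≤ c) (hcL : c + 1 < L)
    (hslab : ∀ v, InGrid d ℓ v → (h v = c ∨ h v = c + 1) → F v (v + e)) :
    ∀ a b, F a b → h b = h a + 1 := by
  have fin := finite_grid d ℓ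
  have flost : (LostS d ℓ F).Finite := fin.subset (fun a ha => ha.1)
  have s1 : ∀ a, InGrid d ℓ a → h a ≤ c → ∃ b, F a b := by
    have hcount := count_lost hF {v | InGrid d ℓ v ∧ c + 1 ≤ h v}
      {v | InGrid d ℓ v ∧ h v = c + 1} (fun a ha => ha.1)
      (fun a ha => ⟨ha.1, ha.2.ge⟩) (by
        rintro a b ⟨ga, ha⟩ hab
        have gb := hF.cod hab
        by_cases h1 : h a = c + 1
        · have := hF.func hab (hslab a ga (Or.inr h1))
          have h2 : h b = c + 2 := by rw [this, H.add]; omega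
          refine ⟨⟨gb, by omega⟩, ?_⟩
          rintro ⟨_, h3⟩
          omega
        · have h2 := H.un (hF.adj hab)
          refine ⟨⟨gb, by omega⟩, ?_⟩
          rintro ⟨_, h3⟩
          have h4 := hslab (b - e) (H.gsub gb (by omega)) (by rw [H.sub]; omega)
          rw [sub_add_cancel] at h4
          have h5 := hF.inj hab h4
          have h6 := H.sub b
          rw [← h5] at h6
          omega)
    rw [hlay _ (by omega) hcL] at hcount
    have heq := Set.eq_of_subset_of_ncard_le (Set.inter_subset_right) (hlost.trans hcount) flost
    intro a ga ha
    by_contra hc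
    push Not at hc
    have : a ∈ LostS d ℓ F := ⟨ga, hc⟩
    rw [← heq] at this
    have := this.1.2
    omega
  have s2 : ∀ n : ℕ, ∀ a, InGrid d ℓ a → h a = c + 1 - n → F a (a + e) := by
    intro n
    induction n with
    | zero => intro a ga ha; exact hslab a ga (Or.inr (by simpa using ha))
    | succ n ih =>
      intro a ga ha
      push_cast at ha
      obtain ⟨b, hb⟩ := s1 a ga (by omega)
      have g2 : InGrid d ℓ (a + e) := H.gadd ga (by omega)
      have h2 := ih _ g2 (by rw [H.add]; omega)
      have := hF.mid hb h2 (by rw [add_sub_cancel_left]; exact H.ue) H.ue (by abel)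
      rwa [this] at hb
  have s3 : ∀ n : ℕ, c + 1 + n ≤ L - 2 → ∀ a, InGrid d ℓ a → h a ≤ c + 1 + n → F a (a + e) := by
    intro n
    induction n with
    | zero =>
      intro _ a ga ha
      refine s2 (c + 1 - h a).toNat a ga ?_
      push_cast at ha
      omega
    | succ n ih =>
      intro hn a ga ha
      push_cast at hn ha
      have ih := ih (by omega)
      obtain ⟨m, hm⟩ : ∃ m : ℤ, m = c + 1 + n := ⟨_, rfl⟩
      rw [← hm] at ih
      by_cases ham : h a ≤ m
      · exact ih a ga ham
      have ham : h a = m + 1 := by omega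
      have back : ∀ x b, F x b → 1 ≤ h b → h b ≤ m + 1 → h x = h b - 1 := by
        intro x b hxb h1 h2
        have h4 := ih (b - e) (H.gsub (hF.cod hxb) h1) (by rw [H.sub]; omega)
        rw [sub_add_cancel] at h4
        rw [hF.inj hxb h4, H.sub]
      by_cases hb : ∃ b, F a b
      · obtain ⟨b, hb⟩ := hb
        rcases H.un (hF.adj hb) with h1 | h1 | h1
        · have := back _ _ hb (by omega) (by omega)
          omega
        · rwa [h1.2] at hb
        · have := back _ _ hb (by omega) (by omega)
          omega
      exfalso
      push Not at hb
      have gy : InGrid d ℓ (a + e) := H.gadd ga (by omega)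
      have hcount := count_lost hF {v | InGrid d ℓ v ∧ m + 1 ≤ h v}
        (insert (a + e) {v | InGrid d ℓ v ∧ h v = m + 1}) (fun a ha => ha.1)
        (by
          intro x hx
          rcases hx with rfl | hx
          · exact ⟨gy, by rw [H.add]; omega⟩
          · exact ⟨hx.1, hx.2.ge⟩) (by
        rintro x b ⟨gx, hx⟩ hxb
        have gb := hF.cod hxb
        have h2 := H.un (hF.adj hxb)
        have h3 : m + 1 < h b := by
          by_contra hcc
          have := back _ _ hxb (by omega) (by omega)
          omega
        refine ⟨⟨gb, by omega⟩, ?_⟩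
        rintro (rfl | h4)
        · have ge := H.gsub ga (by omega)
          have h4 := ih (a - e) ge (by rw [H.sub]; omega)
          rw [sub_add_cancel] at h4
          have h5 := (hF.pres h4 hxb).2 (by rw [add_sub_cancel_left]; exact H.ue)
          have h6 := H.sub a
          rcases H.un h5 with h7 | h7 | h7
          · omega
          · rw [sub_add_cancel] at h7
            rw [h7.2] at hxb
            exact hb _ hxb
          · omega
        · have := h4.2
          omega)
      rw [Set.ncard_insert_of_notMem (by
          rintro ⟨_, h1⟩
          rw [H.add] at h1
          omega) (fin.subset fun x hx => hx.1), hlay _ (by omega) (by omega)] at hcount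
      have := Set.ncard_le_ncard (Set.inter_subset_right :
        {v | InGrid d ℓ v ∧ m + 1 ≤ h v} ∩ LostS d ℓ F ⊆ LostS d ℓ F) flost
      omega
  intro a b hab
  have ga := hF.dom hab
  have gb := hF.cod hab
  have key : ∀ a, InGrid d ℓ a → h a ≤ L - 2 → F a (a + e) := by
    intro a ga ha
    by_cases hcc : h a ≤ c
    · exact s2 (c + 1 - h a).toNat a ga (by omega)
    · by_cases h3 : c + 1 ≤ L - 2
      · exact s3 (L - 2 - (c + 1)).toNat (by omega) a ga (by omega)
      · exact hslab a ga (by omega)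
  by_cases h1 : h a ≤ L - 2
  · rw [hF.func hab (key a ga h1), H.add]
  · have h2 := H.un (hF.adj hab)
    have h3 := H.hi ga
    have h4 := H.hi gb
    have h5 := key (b - e) (H.gsub gb (by omega)) (by rw [H.sub]; omega)
    rw [sub_add_cancel] at h5
    have h6 := H.sub b
    rw [← hF.inj hab h5] at h6
    omega

theorem layer_conn {d : ℕ} {ℓ : Fin d → ℕ} (i0 : Fin d) (p : (Fin d → ℤ) → Prop)
    (hp : ∀ v w, InGrid d ℓ v → InGrid d ℓ w → v i0 = w i0 → UnitV (w - v) → p v → p w)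
    (v : Fin d → ℤ) (hv : InGrid d ℓ v) (hpv : p v) :
    ∀ n : ℕ, ∀ w, InGrid d ℓ w → v i0 = w i0 → ∑ i, (w i - v i).natAbs = n → p w := by
  intro n
  induction n using Nat.strong_induction_on with
  | _ n ih =>
    intro w hw h0 hn
    by_cases hvw : w = v
    · rw [hvw]; exact hpv
    obtain ⟨i, hi⟩ : ∃ i, w i ≠ v i := by
      by_contra hc
      push Not at hc
      exact hvw (funext hc)
    obtain ⟨s, hs, hs2⟩ : ∃ s : ℤ, (s = 1 ∨ s = -1) ∧
        ((s = 1 ∧ w i < v i) ∨ (s = -1 ∧ v i < w i)) := by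
      rcases lt_or_gt_of_ne hi with h | h
      · exact ⟨1, Or.inl rfl, Or.inl ⟨rfl, h⟩⟩
      · exact ⟨-1, Or.inr rfl, Or.inr ⟨rfl, h⟩⟩
    have hi0 : i0 ≠ i := by rintro rfl; exact hi h0.symm
    have g' : InGrid d ℓ (w + Pi.single i s) := by
      rw [hw.add_single]
      have h1 := hw i
      have h2 := hv i
      omega
    have hlt : ∑ k, ((w + Pi.single i s : Fin d → ℤ) k - v k).natAbs < n := by
      rw [← hn]
      refine Finset.sum_lt_sum (fun k _ => ?_) ⟨i, Finset.mem_univ i, ?_⟩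
      · by_cases hk : k = i
        · subst hk; simp; omega
        · simp [hk]
      · simp; omega
    have h1 := ih _ hlt _ g' (by simpa [hi0] using h0) rfl
    refine hp _ _ g' hw (by simp [hi0]) ?_ h1
    refine ⟨i, -s, by omega, ?_⟩
    rw [Pi.single_neg]; abel

theorem unitV_apply {d : ℕ} {u : Fin d → ℤ} (h : UnitV u) (i : Fin d) :
    -1 ≤ u i ∧ u i ≤ 1 := by
  obtain ⟨k, s, hs, rfl⟩ := h
  rw [Pi.single_apply]
  split_ifs <;> omega

theorem slab_moves {d : ℕ} {ℓ : Fin d → ℕ} {F : (Fin d → ℤ) → (Fin d → ℤ) → Prop}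
    (hF : CRel d ℓ F) (i0 : Fin d) (c : ℤ) (hfull : ∀ v, Slab ℓ i0 c v → ∃ w, F v w)
    (hc0 : 0 ≤ c) (hcL : c + 1 < ℓ i0) (hl3 : ∀ j, j ≠ i0 → 3 ≤ ℓ j)
    (v : Fin d → ℤ) (hv : Slab ℓ i0 c v) :
    F v (v + Pi.single i0 1) ∨ F v (v - Pi.single i0 1) := by
  obtain ⟨w, hw⟩ := hfull v hv
  obtain ⟨k, s, hs, hk⟩ := hF.adj hw
  have e : w = v + Pi.single k s := by rw [← hk]; abel
  rw [e] at hw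
  by_cases hki : k = i0
  · subst hki
    rcases hs with rfl | rfl
    · exact Or.inl hw
    · right; rw [Pi.single_neg, ← sub_eq_add_neg] at hw; exact hw
  · exact (slab_B hF i0 c hfull hc0 hcL k hki (hl3 k hki) s hs v hv hw).elim

theorem layer_uniform {d : ℕ} {ℓ : Fin d → ℕ} {F : (Fin d → ℤ) → (Fin d → ℤ) → Prop}
    (hF : CRel d ℓ F) (i0 : Fin d) (c : ℤ)
    (hm : ∀ v, InGrid d ℓ v → v i0 = c →
      F v (v + Pi.single i0 1) ∨ F v (v - Pi.single i0 1)) :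
    (∀ v, InGrid d ℓ v → v i0 = c → F v (v + Pi.single i0 1)) ∨
    (∀ v, InGrid d ℓ v → v i0 = c → F v (v - Pi.single i0 1)) := by
  by_cases hex : ∃ v, InGrid d ℓ v ∧ v i0 = c ∧ F v (v + Pi.single i0 1)
  · obtain ⟨v, gv, hv, hFv⟩ := hex
    left
    intro w gw hw
    have := layer_conn (ℓ := ℓ) i0 (fun v => v i0 = c → F v (v + Pi.single i0 1)) (by
      intro a b ga gb hab hU ha hb
      rcases hm b gb hb with h | h
      · exact h
      · have h2 := (hF.pres (ha (by omega)) h).1 hU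
        have := (unitV_apply h2 i0)
        simp at this
        omega) v gv (fun _ => hFv) _ w gw (by omega) rfl
    exact this hw
  · right
    push Not at hex
    intro v gv hv
    rcases hm v gv hv with h | h
    · exact (hex v gv hv h).elim
    · exact h

theorem slab_class {d : ℕ} {ℓ : Fin d → ℕ} {F : (Fin d → ℤ) → (Fin d → ℤ) → Prop}
    (hF : CRel d ℓ F) (i0 : Fin d) (c : ℤ) (hfull : ∀ v, Slab ℓ i0 c v → ∃ w, F v w)
    (hc0 : 0 ≤ c) (hcL : c + 1 < ℓ i0) (hl3 : ∀ j, j ≠ i0 → 3 ≤ ℓ j) :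
    (∀ v, InGrid d ℓ v → (v i0 = c ∨ v i0 = c + 1) → F v (v + Pi.single i0 1)) ∨
    (∀ v, InGrid d ℓ v → (v i0 = c ∨ v i0 = c + 1) → F v (v - Pi.single i0 1)) ∨
    ((∀ v, InGrid d ℓ v → v i0 = c → F v (v + Pi.single i0 1)) ∧
     (∀ v, InGrid d ℓ v → v i0 = c + 1 → F v (v - Pi.single i0 1))) := by
  have hm := slab_moves hF i0 c hfull hc0 hcL hl3
  rcases layer_uniform hF i0 c (fun v gv hv => hm v ⟨gv, Or.inl hv⟩) with h1 | h1 <;>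
  rcases layer_uniform hF i0 (c + 1) (fun v gv hv => hm v ⟨gv, Or.inr hv⟩) with h2 | h2
  · left
    rintro v gv (h | h)
    · exact h1 v gv h
    · exact h2 v gv h
  · right; right
    exact ⟨h1, h2⟩
  · exfalso
    obtain ⟨b, gb, hb⟩ : ∃ b, InGrid d ℓ b ∧ b i0 = c := by
      refine ⟨fun i => if i = i0 then c else 0, ?_, by simp⟩
      intro i
      by_cases hi : i = i0
      · subst hi; simp; omega
      · have := hl3 i hi
        simp [hi]; omega
    have g2 : InGrid d ℓ (b + Pi.single i0 1) := by
      rw [gb.add_single]; omega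
    have f1 := h1 b gb hb
    have f2 := h2 _ g2 (by simp; omega)
    have := (hF.pres f1 f2).1 (by
      rw [add_sub_cancel_left]; exact ⟨i0, 1, Or.inl rfl, rfl⟩)
    have := unitV_apply this i0
    simp at this
  · right; left
    rintro v gv (h | h)
    · exact h1 v gv h
    · exact h2 v gv h

theorem swap_lost {d : ℕ} {ℓ : Fin d → ℕ} {F : (Fin d → ℤ) → (Fin d → ℤ) → Prop}
    (hF : CRel d ℓ F) (i0 : Fin d) (c : ℤ) (hc0 : 0 ≤ c) (hcL : c + 1 < ℓ i0)
    (h1 : ∀ v, InGrid d ℓ v → v i0 = c → F v (v + Pi.single i0 1))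
    (h2 : ∀ v, InGrid d ℓ v → v i0 = c + 1 → F v (v - Pi.single i0 1)) :
    ∀ a, InGrid d ℓ a → (a i0 = c - 1 ∨ a i0 = c + 2) → a ∈ LostS d ℓ F := by
  intro a ga ha
  refine ⟨ga, fun b hb => ?_⟩
  obtain ⟨e, he⟩ : ∃ e : Fin d → ℤ, e = Pi.single i0 1 := ⟨_, rfl⟩
  have Ue : UnitV e := ⟨i0, 1, Or.inl rfl, he⟩
  have ei : e i0 = 1 := by simp [he]
  have en : -e = Pi.single i0 (-1) := by rw [he, Pi.single_neg]
  rw [← he] at h1 h2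
  rcases ha with ha | ha
  · have g1 : InGrid d ℓ (a + e) := by rw [he, ga.add_single]; omega
    have g2 : InGrid d ℓ (a + e + e) := by rw [he] at g1 ⊢; rw [g1.add_single]; simp; omega
    have f1 := h1 _ g1 (by simp [ei]; omega)
    have f2 := h2 _ g2 (by simp [ei]; omega)
    have := hF.mid hb f1 (by rw [add_sub_cancel_left]; exact Ue) Ue (by abel)
    rw [this] at hb
    rw [add_sub_cancel_right] at f2
    have := congrFun (hF.inj hb f2) i0
    simp [ei] at this
    omega
  · have g1 : InGrid d ℓ (a + -e) := by rw [en, ga.add_single]; omega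
    have g2 : InGrid d ℓ (a + -e + -e) := by rw [en] at g1 ⊢; rw [g1.add_single]; simp; omega
    have f1 := h2 _ g1 (by simp [ei]; omega)
    have f2 := h1 _ g2 (by simp [ei]; omega)
    have := hF.mid hb f1 (by rw [add_sub_cancel_left]; exact unitV_neg Ue) (unitV_neg Ue) (by abel)
    rw [this] at hb
    rw [neg_add_cancel_right] at f2
    have := congrFun (hF.inj hb f2) i0
    simp [ei] at this
    omega

theorem hdata_plus {d : ℕ} (ℓ : Fin d → ℕ) (i0 : Fin d) :
    HData d ℓ (ℓ i0) (fun v => v i0) (Pi.single i0 1) where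
  lo hv := (hv i0).1
  hi hv := (hv i0).2
  add v := by simp
  sub v := by simp
  gadd {v} hv h := by rw [hv.add_single]; have := hv i0; omega
  gsub {v} hv h := by
    have : v - Pi.single i0 1 = v + Pi.single i0 (-1) := by rw [Pi.single_neg]; abel
    rw [this, hv.add_single]; have := hv i0; omega
  ue := ⟨i0, 1, Or.inl rfl, rfl⟩
  un {a b} h := by
    obtain ⟨k, s, hs, h⟩ := h
    have e : b = a + Pi.single k s := by rw [← h]; abel
    by_cases hk : k = i0
    · subst hk
      rcases hs with rfl | rfl
      · right; left; simp [e]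
      · right; right; rw [e, Pi.single_neg]; simp [sub_eq_add_neg]
    · left; simp [e, Ne.symm hk]

theorem hdata_minus {d : ℕ} (ℓ : Fin d → ℕ) (i0 : Fin d) :
    HData d ℓ (ℓ i0) (fun v => ℓ i0 - 1 - v i0) (-Pi.single i0 1) where
  lo hv := by have := hv i0; omega
  hi hv := by have := hv i0; omega
  add v := by simp; omega
  sub v := by simp; omega
  gadd {v} hv h := by
    have := hv i0
    exact (hdata_plus ℓ i0).gsub hv (by omega) |> fun h => by rwa [sub_eq_add_neg] at h
  gsub {v} hv h := by
    have := hv i0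
    exact (hdata_plus ℓ i0).gadd hv (by omega) |> fun h => by rwa [sub_neg_eq_add]
  ue := unitV_neg ⟨i0, 1, Or.inl rfl, rfl⟩
  un {a b} h := by
    rcases (hdata_plus ℓ i0).un h with h | h | h
    · left; omega
    · right; right; exact ⟨by omega, by rw [sub_neg_eq_add]; exact h.2⟩
    · right; left; exact ⟨by omega, by rw [← sub_eq_add_neg]; exact h.2⟩

/-- A layer of the grid. -/
def LayS {d : ℕ} (ℓ : Fin d → ℕ) (i0 : Fin d) (c : ℤ) : Set (Fin d → ℤ) :=
  {v | InGrid d ℓ v ∧ v i0 = c}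

theorem layS_ncard {d : ℕ} (ℓ : Fin d → ℕ) (i0 : Fin d) (c : ℤ) (h0 : 0 ≤ c) (hL : c < ℓ i0) :
    (LayS ℓ i0 c).ncard = (LayS ℓ i0 0).ncard := by
  have : LayS ℓ i0 c = (fun v => v + Pi.single i0 c) '' LayS ℓ i0 0 := by
    ext v
    constructor
    · rintro ⟨gv, hv⟩
      refine ⟨v + Pi.single i0 (-c), ⟨?_, ?_⟩, ?_⟩
      · rw [gv.add_single]; omega
      · simp [hv]
      · simp only [add_assoc, ← Pi.single_add]; simp
    · rintro ⟨w, ⟨gw, hw⟩, rfl⟩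
      refine ⟨?_, ?_⟩
      · rw [gw.add_single]; omega
      · simp [hw]
  rw [this]
  exact Set.ncard_image_of_injective _ (fun a b h => by simpa using h)

theorem grid_core {d : ℕ} {ℓ : Fin d → ℕ} {F : (Fin d → ℤ) → (Fin d → ℤ) → Prop}
    (hF : CRel d ℓ F) (i0 : Fin d) (hl3 : ∀ j, j ≠ i0 → 3 ≤ ℓ j) (h8 : 8 ≤ ℓ i0)
    (hP : 2 * (LayS ℓ i0 0).ncard + 2 ≤ ℓ i0)
    (hlost : (LostS d ℓ F).ncard ≤ (LayS ℓ i0 0).ncard) :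
    ∃ h : (Fin d → ℤ) → ℤ, (∀ a b, F a b → h b = h a + 1) ∧ (∀ a, InGrid d ℓ a → h a < ℓ i0)
      ∧ (∀ a, InGrid d ℓ a → 0 ≤ h a) := by
  have fin := finite_grid d ℓ
  have flost : (LostS d ℓ F).Finite := fin.subset (fun a ha => ha.1)
  have flay : ∀ c, (LayS ℓ i0 c).Finite := fun c => fin.subset (fun a ha => ha.1)
  have hPpos : 0 < (LayS ℓ i0 0).ncard := by
    rw [Set.ncard_pos (flay 0)]
    refine ⟨fun _ => 0, fun i => ?_, rfl⟩
    by_cases hi : i = i0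
    · subst hi; simp; omega
    · have := hl3 i hi
      simp; omega
  have finish : ∀ c : ℤ, 0 ≤ c → c + 1 < ℓ i0 → (∀ v, Slab ℓ i0 c v → ∃ w, F v w) →
      (∃ h : (Fin d → ℤ) → ℤ, (∀ a b, F a b → h b = h a + 1) ∧
        (∀ a, InGrid d ℓ a → h a < ℓ i0) ∧ (∀ a, InGrid d ℓ a → 0 ≤ h a)) ∨
      (∀ a, InGrid d ℓ a → (a i0 = c - 1 ∨ a i0 = c + 2) → a ∈ LostS d ℓ F) := by
    intro c hc0 hcL hfull
    rcases slab_class hF i0 c hfull hc0 hcL hl3 with h | h | ⟨h, h'⟩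
    · left
      refine ⟨_, trans_main hF (ℓ i0) (by omega) _ _ (hdata_plus ℓ i0) _
        (fun c h0 hL => layS_ncard ℓ i0 c h0 hL) hlost c hc0 hcL h,
        fun a ga => (hdata_plus ℓ i0).hi ga, fun a ga => (hdata_plus ℓ i0).lo ga⟩
    · left
      refine ⟨_, trans_main hF (ℓ i0) (by omega) _ _ (hdata_minus ℓ i0) (LayS ℓ i0 0).ncard
        (fun c h0 hL => ?_) hlost (ℓ i0 - 2 - c) (by omega) (by omega) (fun v gv hv => ?_),
        fun a ga => (hdata_minus ℓ i0).hi ga, fun a ga => (hdata_minus ℓ i0).lo ga⟩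
      · rw [← layS_ncard ℓ i0 (ℓ i0 - 1 - c) (by omega) (by omega)]
        congr 1
        ext v
        simp only [LayS, Set.mem_ofPred_eq]
        constructor <;> rintro ⟨h1, h2⟩ <;> exact ⟨h1, by omega⟩
      · rw [← sub_eq_add_neg]
        exact h v gv (by omega)
    · right
      exact swap_lost hF i0 c hc0 hcL h h'

  obtain ⟨c, hc0, hcL, hfull⟩ : ∃ c : ℤ, 0 ≤ c ∧ c + 1 < ℓ i0 ∧
      (∀ v, Slab ℓ i0 c v → ∃ w, F v w) := by
    by_contra hc
    push Not at hc
    have : ∀ k : ℕ, k ≤ (LayS ℓ i0 0).ncard → ∃ v ∈ LostS d ℓ F, v i0 / 2 = k := by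
      intro k hk
      obtain ⟨v, hv, hv2⟩ := hc (2 * k) (by omega) (by omega)
      have := hv.2
      exact ⟨v, ⟨hv.1, hv2⟩, by omega⟩
    have h2 : ((fun k : ℕ => (k : ℤ)) '' Set.Iic (LayS ℓ i0 0).ncard) ⊆
        (fun v : Fin d → ℤ => v i0 / 2) '' LostS d ℓ F := by
      rintro _ ⟨k, hk, rfl⟩
      obtain ⟨v, hv, hv2⟩ := this k hk
      exact ⟨v, hv, hv2⟩
    have h3 := Set.ncard_le_ncard h2 (flost.image _)
    rw [Set.ncard_image_of_injective _ Nat.cast_injective] at h3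
    have h4 := Set.ncard_image_le (f := fun v : Fin d → ℤ => v i0 / 2) flost
    have h5 : (Set.Iic (LayS ℓ i0 0).ncard).ncard = (LayS ℓ i0 0).ncard + 1 := by
      rw [← Finset.coe_Iic, Set.ncard_coe_finset, Nat.card_Iic]
    omega
  rcases finish c hc0 hcL hfull with h | h
  · exact h
  have interior : ∀ c : ℤ, 1 ≤ c → c + 2 < ℓ i0 →
      (∀ a, InGrid d ℓ a → (a i0 = c - 1 ∨ a i0 = c + 2) → a ∈ LostS d ℓ F) → False := by
    intro c h1 h2 h
    have hsub : LayS ℓ i0 (c - 1) ∪ LayS ℓ i0 (c + 2) ⊆ LostS d ℓ F := by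
      rintro a (ha | ha)
      · exact h a ha.1 (Or.inl ha.2)
      · exact h a ha.1 (Or.inr ha.2)
    have h3 := Set.ncard_le_ncard hsub flost
    rw [Set.ncard_union_eq (by
      rw [Set.disjoint_left]
      rintro a ⟨_, ha⟩ ⟨_, ha'⟩
      omega) (flay _) (flay _), layS_ncard _ _ (c - 1) (by omega) (by omega),
      layS_ncard _ _ (c + 2) (by omega) (by omega)] at h3
    omega
  obtain ⟨m, hm, hm0, hmL, hml⟩ : ∃ m : ℤ, (m ≠ 3 ∧ m ≠ 4) ∧ 0 ≤ m ∧ m < ℓ i0 ∧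
      LayS ℓ i0 m ⊆ LostS d ℓ F := by
    by_cases hc1 : c = 0
    · exact ⟨2, by omega, by omega, by omega, fun a ha => h a ha.1 (Or.inr (by rw [ha.2]; omega))⟩
    · have : c + 2 = ℓ i0 := by
        by_contra hne
        exact interior c (by omega) (by omega) h
      exact ⟨c - 1, by omega, by omega, by omega, fun a ha => h a ha.1 (Or.inl ha.2)⟩
  have heq := Set.eq_of_subset_of_ncard_le hml
    (by rw [layS_ncard _ _ _ hm0 hmL]; exact hlost) flost
  rcases finish 3 (by omega) (by omega) (by
    intro v hv
    by_contra hc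
    push Not at hc
    have : v ∈ LostS d ℓ F := ⟨hv.1, hc⟩
    rw [← heq] at this
    have h1 := this.2
    have h2 := hv.2
    omega) with h | h
  · exact h
  · exact (interior 3 (by omega) (by omega) h).elim

theorem maximal_candidate_orbit_period_four
    (d : ℕ) (hd : 0 < d) (ℓ : Fin d → ℕ)
    (hℓ : ∀ i : Fin d, (i : ℕ) + 1 < d →
      2 * (∏ k ∈ Finset.univ.filter (fun k : Fin d => i < k), ℓ k) + 2 ≤ ℓ i)
    (hlast : 3 ≤ ℓ ⟨d - 1, by omega⟩)
    (f : {v : Fin d → ℤ // InGrid d ℓ v} → Option {v : Fin d → ℤ // InGrid d ℓ v})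
    (hf : IsCandidateGridTranslation d ℓ f)
    (hmax : ∀ g, IsCandidateGridTranslation d ℓ g →
      Set.ncard {v | g v ≠ none} ≤ Set.ncard {v | f v ≠ none})
    (v : {v : Fin d → ℤ // InGrid d ℓ v})
    (hv : ∀ n, (fun o => Option.bind o f)^[n] (some v) ≠ none) :
    ∃ N, ∀ n, N ≤ n →
      (fun o => Option.bind o f)^[n + 4] (some v) =
        (fun o => Option.bind o f)^[n] (some v) := by
  classical
  let V := {v : Fin d → ℤ // InGrid d ℓ v}
  have finV : Finite V := (finite_grid d ℓ).to_subtype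
  let F : (Fin d → ℤ) → (Fin d → ℤ) → Prop := fun a b =>
    ∃ ha : InGrid d ℓ a, ∃ hb : InGrid d ℓ b, f ⟨a, ha⟩ = some ⟨b, hb⟩
  have hF : CRel d ℓ F := by
    refine ⟨?_, ?_, ?_, ?_, ?_, ?_⟩
    · rintro a b ⟨ha, hb, h⟩; exact ha
    · rintro a b ⟨ha, hb, h⟩; exact hb
    · rintro a b b' ⟨ha, hb, h⟩ ⟨ha', hb', h'⟩
      rw [h] at h'
      simpa using h'
    · rintro a a' b ⟨ha, hb, h⟩ ⟨ha', hb', h'⟩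
      simpa using hf.inj _ _ _ h h'
    · rintro a b ⟨ha, hb, h⟩
      exact (taxi_iff _ _).1 (hf.adj_map _ _ h)
    · rintro a b a' b' ⟨ha, hb, h⟩ ⟨ha', hb', h'⟩
      rw [← taxi_iff, ← taxi_iff]
      exact hf.pres _ _ _ _ h h'
  have hsucc : ∀ n, (fun o => Option.bind o f)^[n + 1] (some v) =
      Option.bind ((fun o => Option.bind o f)^[n] (some v)) f := by
    intro n
    rw [Function.iterate_succ_apply']
  have hseq : ∀ n, ∃ w, (fun o => Option.bind o f)^[n] (some v) = some w := by
    intro n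
    exact Option.ne_none_iff_exists'.1 (hv n)
  choose x hx using hseq
  have hstep : ∀ n, f (x n) = some (x (n + 1)) := by
    intro n
    have := hsucc n
    rw [hx, hx] at this
    simpa using this.symm
  have hFx : ∀ n, F (x n).1 (x (n + 1)).1 := fun n => ⟨(x n).2, (x (n + 1)).2, hstep n⟩
  have noH : ∀ (h : (Fin d → ℤ) → ℤ) (L : ℤ), (∀ n, h (x (n + 1)).1 = h (x n).1 + 1) →
      (∀ a, InGrid d ℓ a → h a < L) → (∀ a, InGrid d ℓ a → 0 ≤ h a) → False := by
    intro h L h1 h2 h3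
    have h4 : ∀ n : ℕ, h (x n).1 = h (x 0).1 + n := by
      intro n
      induction n with
      | zero => simp
      | succ n ih => rw [h1, ih]; push_cast; ring
    have h5 := h4 L.toNat
    have h6 := h2 _ (x L.toNat).2
    have h7 := h3 _ (x 0).2
    omega
  rcases Nat.lt_or_ge d 2 with hd2 | hd2
  · -- one-dimensional case
    have hd1 : d = 1 := by omega
    subst hd1
    let y : ℕ → ℤ := fun n => (x n).1 0
    have hext : ∀ m n, y m = y n → x m = x n := by
      intro m n h
      apply Subtype.ext
      funext i
      rw [Subsingleton.elim i 0]
      exact h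
    have hy : ∀ n, y (n + 1) = y n + 1 ∨ y (n + 1) = y n - 1 := by
      intro n
      obtain ⟨k, s, hs, h⟩ := hF.adj (hFx n)
      have := congrFun h 0
      rw [Subsingleton.elim k 0] at this
      simp at this
      simp only [y]
      omega
    by_cases hturn : ∃ N, y (N + 2) = y N
    · obtain ⟨N, hN⟩ := hturn
      have hper : ∀ k, x (N + k + 2) = x (N + k) := by
        intro k
        induction k with
        | zero => exact hext _ _ hN
        | succ k ih =>
          have h1 := hstep (N + k + 2)
          have h2 := hstep (N + k)
          rw [ih, h2] at h1
          exact (Option.some.inj h1).symm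
      refine ⟨N, fun n hn => ?_⟩
      obtain ⟨k, rfl⟩ := Nat.exists_eq_add_of_le hn
      rw [hx, hx]
      have h1 := hper (k + 2)
      have h2 := hper k
      rw [← add_assoc] at h1
      rw [show N + k + 4 = N + k + 2 + 2 from rfl, h1, h2]
    · exfalso
      push Not at hturn
      rcases hy 0 with h0 | h0
      · have : ∀ n, y (n + 1) = y n + 1 := by
          intro n
          induction n with
          | zero => exact h0
          | succ n ih =>
            have h1 := hy (n + 1)
            have h2 := hturn n
            rw [show n + 1 + 1 = n + 2 from rfl] at h1 ⊢
            omega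
        exact noH (fun a => a 0) (ℓ 0) this (fun a ha => (ha 0).2) (fun a ha => (ha 0).1)
      · have : ∀ n, y (n + 1) = y n - 1 := by
          intro n
          induction n with
          | zero => exact h0
          | succ n ih =>
            have h1 := hy (n + 1)
            have h2 := hturn n
            rw [show n + 1 + 1 = n + 2 from rfl] at h1 ⊢
            omega
        refine noH (fun a => ℓ 0 - 1 - a 0) (ℓ 0) (fun n => ?_) (fun a ha => ?_) (fun a ha => ?_)
        · have := this n
          simp only [y] at this
          omega
        · have := ha 0
          omega
        · have := ha 0
          omega
  · exfalso
    let i0 : Fin d := ⟨0, hd⟩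
    have hpos : ∀ k, 2 ≤ ℓ k := by
      intro k
      by_cases hk : (k : ℕ) + 1 < d
      · have := hℓ k hk
        omega
      · have : k = ⟨d - 1, by omega⟩ := by
          apply Fin.ext
          have := k.2
          simp only
          omega
        rw [this]; omega
    have h3 : ∀ k, 3 ≤ ℓ k := by
      intro k
      by_cases hk : (k : ℕ) + 1 < d
      · have h1 := hℓ k hk
        have h2 : 0 < ∏ k' ∈ Finset.univ.filter (fun k' : Fin d => k < k'), ℓ k' :=
          Finset.prod_pos (fun i _ => by have := hpos i; omega)
        omega
      · have : k = ⟨d - 1, by omega⟩ := by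
          apply Fin.ext
          have := k.2
          simp only
          omega
        rw [this]; omega
    have hL := hℓ i0 (by simp only [i0]; omega)
    have hP3 : 3 ≤ ∏ k ∈ Finset.univ.filter (fun k : Fin d => i0 < k), ℓ k := by
      refine (h3 ⟨1, by omega⟩).trans ?_
      exact Finset.single_le_prod' (f := ℓ) (fun i _ => by have := hpos i; omega)
        (by simp [i0, Fin.lt_def])
    have hlay : (LayS ℓ i0 0).ncard ≤ ∏ k ∈ Finset.univ.filter (fun k : Fin d => i0 < k), ℓ k := by
      have e : ∏ k ∈ Finset.univ.filter (fun k : Fin d => i0 < k), ℓ k =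
          ((Finset.univ.filter (fun k : Fin d => i0 < k)).pi (fun k => Finset.range (ℓ k))).card := by
        rw [Finset.card_pi]; simp
      rw [e, ← Set.ncard_coe_finset]
      refine Set.ncard_le_ncard_of_injOn (fun w k _ => (w k).toNat) ?_ ?_ (Finset.finite_toSet _)
      · intro w hw
        simp only [Finset.mem_coe, Finset.mem_pi, Finset.mem_range]
        intro k _
        have := hw.1 k
        omega
      · intro w hw w' hw' h
        funext k
        by_cases hk : i0 < k
        · have h1 := congrFun (congrFun h k) (by simp [hk])
          have h2 := hw.1 k
          have h4 := hw'.1 k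
          simp only at h1
          omega
        · have : k = i0 := by
            apply Fin.ext
            simp only [i0, Fin.lt_def] at hk ⊢
            omega
          rw [this, hw.2, hw'.2]
    let g : V → Option V := fun a =>
      if h : InGrid d ℓ (a.1 + Pi.single i0 1) then some ⟨_, h⟩ else none
    have hgs : ∀ a b, g a = some b → b.1 = a.1 + Pi.single i0 1 := by
      intro a b h
      simp only [g] at h
      split_ifs at h with h1
      rw [← Option.some.inj h]
    have hg : IsCandidateGridTranslation d ℓ g := by
      refine ⟨?_, ?_, ?_⟩
      · intro a b c h1 h2
        have e1 := hgs _ _ h1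
        have e2 := hgs _ _ h2
        apply Subtype.ext
        rw [e1] at e2
        simpa using e2
      · intro a b h
        rw [taxi_iff, hgs _ _ h, add_sub_cancel_left]
        exact ⟨i0, 1, Or.inl rfl, rfl⟩
      · intro a b c e h1 h2
        rw [taxi_iff, taxi_iff, hgs _ _ h1, hgs _ _ h2, add_sub_add_right_eq_sub]
    have hcmp := hmax g hg
    have c1 := Set.ncard_add_ncard_compl {a : V | f a ≠ none}
    have c2 := Set.ncard_add_ncard_compl {a : V | g a ≠ none}
    have e1 : LostS d ℓ F = Subtype.val '' {a : V | f a ≠ none}ᶜ := by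
      ext a
      constructor
      · rintro ⟨ga, ha⟩
        refine ⟨⟨a, ga⟩, ?_, rfl⟩
        intro hc
        obtain ⟨b, hb⟩ := Option.ne_none_iff_exists'.1 hc
        exact ha b.1 ⟨ga, b.2, hb⟩
      · rintro ⟨⟨a, ga⟩, ha, rfl⟩
        have ha : f ⟨a, ga⟩ = none := not_not.1 ha
        refine ⟨ga, ?_⟩
        rintro b ⟨_, hb, h⟩
        rw [ha] at h
        cases h
    have e2 : Subtype.val '' {a : V | g a ≠ none}ᶜ ⊆ LayS ℓ i0 (ℓ i0 - 1) := by
      rintro _ ⟨⟨a, ga⟩, ha, rfl⟩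
      have ha : g ⟨a, ga⟩ = none := not_not.1 ha
      refine ⟨ga, ?_⟩
      have h1 : ¬ InGrid d ℓ (a + Pi.single i0 1) := by
        intro h
        simp [g, h] at ha
      rw [ga.add_single] at h1
      have := ga i0
      simp only
      omega
    have n1 : (LostS d ℓ F).ncard = ({a : V | f a ≠ none}ᶜ).ncard := by
      rw [e1, Set.ncard_image_of_injective _ Subtype.val_injective]
    have n2 := Set.ncard_le_ncard e2 ((finite_grid d ℓ).subset (fun a ha => ha.1))
    have hp0 := hpos i0
    rw [Set.ncard_image_of_injective _ Subtype.val_injective,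
      layS_ncard _ _ _ (by omega) (by omega)] at n2
    have hlost : (LostS d ℓ F).ncard ≤ (LayS ℓ i0 0).ncard := by
      have hcmp' : {a : V | g a ≠ none}.ncard ≤ {a : V | f a ≠ none}.ncard := hcmp
      omega
    obtain ⟨h, hh1, hh2, hh3⟩ := grid_core hF i0 (fun j _ => h3 j) (by omega) (by omega) hlost
    exact noH h _ (fun n => hh1 _ _ (hFx n)) hh2 hh3
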